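/- arXiv:2505.12270 — 2 statements merged into one kernel-verified Lean document; each statement's English description precedes it below -/
import Mathlib

section
/- For every nonnegative integer n: (i) b^2_{3,4}(6n+4) ≡ 0 (mod 2); (ii) b^2_{3,4}(6n+2) ≡ b^3_3(n) (mod 2); (iii) b^2_{3,4}(12n+6) ≡ 0 (mod 2); (iv) b^2_{3,4}(12n) ≡ p(n) (mod 2), where p(n) is the number of unrestricted partitions of n. -/
/-- `coloredRegular k l m n` is the number of `k`-colored partitions of `n` into parts
divisible by neither `l` nor `m`, i.e. the coefficient of `q^n` in
`∏_{j ≥ 1, l ∤ j, m ∤ j} (1 - q^j)^{-k}`.  A `k`-colored partition is a multiset of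
(part, color) pairs, where parts are positive integers not divisible by `l` or `m`
and colors range over `{0, …, k-1}`. -/
noncomputable def coloredRegular (k l m n : ℕ) : ℕ :=
  Nat.card {M : Multiset (ℕ × ℕ) //
    (∀ x ∈ M, ¬ l ∣ x.1 ∧ ¬ m ∣ x.1 ∧ x.2 < k) ∧ (M.map Prod.fst).sum = n}
/-- `coloredLRegular k l n` is the number of `k`-colored `l`-regular partitions of `n`,
i.e. the coefficient of `q^n` in `∏_{j ≥ 1, l ∤ j} (1 - q^j)^{-k}`. -/
noncomputable def coloredLRegular (k l n : ℕ) : ℕ :=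
  Nat.card {M : Multiset (ℕ × ℕ) //
    (∀ x ∈ M, ¬ l ∣ x.1 ∧ x.2 < k) ∧ (M.map Prod.fst).sum = n}


/-!
Write `f_m = ∏ (1 - q ^ (m * j))`, which is `expand m f₁`. Modulo `2` squaring is the substitution
`q ↦ q ^ 2`, so the generating function of `b²_{3,4}` is the square of
`f₃ * f₄ / (f₁ * f₁₂) = f₁ ^ 3 / f₃ ^ 3`. Gauss's identity `∑ q ^ (k (k + 1) / 2) = f₂ ^ 2 / f₁`
makes `f₁ ^ 3` the series of triangular numbers, and sorting the triangular numbers modulo `3` gives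
`f₁ ^ 3 = f₃ + q * f₉ ^ 3`: the indices `k = 3 * j` and `k = 3 * j + 2` yield three times a
pentagonal number, the indices `k = 3 * j + 1` yield nine times a triangular number, plus one.
Hence `∑ b²_{3,4}(n) q ^ n = 1 / f₁₂ + q ^ 2 * (f₁₈ / f₆) ^ 3`.
-/

open Finset PowerSeries
open scoped PowerSeries.WithPiTopology

section WeightSeries

variable (R : Type*) [CommSemiring R] {α β : Type*}

/-- The generating function `∑ a, X ^ w a` counting the elements of each weight. A weight that is
attained infinitely often gets the coefficient `0`. -/
noncomputable def weightSeries (w : α → ℕ) : R⟦X⟧ :=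
  .mk fun n ↦ (Nat.card {a // w a = n} : R)

variable {R}

theorem weightSeries_congr {v : α → ℕ} {w : β → ℕ} (e : α ≃ β) (h : ∀ a, w (e a) = v a) :
    weightSeries R v = weightSeries R w := by
  ext n
  simp only [weightSeries, coeff_mk]
  rw [Nat.card_congr (e.subtypeEquiv (q := fun b ↦ w b = n) fun a ↦ by rw [h])]

theorem weightSeries_of_unique [Unique α] {w : α → ℕ} (h : w default = 0) :
    weightSeries R w = 1 := by
  ext n
  rw [weightSeries, coeff_mk, coeff_one]
  split_ifs with hn
  · have : Unique {a // w a = n} := ⟨⟨default, h.trans hn.symm⟩, fun _ ↦ Subsingleton.elim _ _⟩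
    simp
  · have : IsEmpty {a // w a = n} :=
      ⟨fun a ↦ hn (by rw [← a.2, Unique.eq_default a.1, h])⟩
    simp

/-- Pairs of total weight `n`, sorted by the weights of their two components. -/
def addWeightEquiv (v : α → ℕ) (w : β → ℕ) (n : ℕ) :
    {x : α × β // v x.1 + w x.2 = n} ≃
      Σ ij : antidiagonal n, {a // v a = ij.1.1} × {b // w b = ij.1.2} where
  toFun x := ⟨⟨(v x.1.1, w x.1.2), by simpa using x.2⟩, ⟨x.1.1, rfl⟩, ⟨x.1.2, rfl⟩⟩
  invFun s := ⟨(s.2.1.1, s.2.2.1), by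
    rw [s.2.1.2, s.2.2.2]
    exact mem_antidiagonal.1 s.1.2⟩
  left_inv _ := rfl
  right_inv := by
    rintro ⟨⟨⟨_, _⟩, h⟩, ⟨a, ha⟩, ⟨b, hb⟩⟩
    dsimp only at ha hb
    subst ha hb
    rfl

theorem finite_add_weight_eq {v : α → ℕ} {w : β → ℕ} [∀ n, Finite {a // v a = n}]
    [∀ n, Finite {b // w b = n}] (n : ℕ) :
    Finite {x : α × β // v x.1 + w x.2 = n} :=
  .of_equiv _ (addWeightEquiv v w n).symm

theorem weightSeries_add {v : α → ℕ} {w : β → ℕ} [∀ n, Finite {a // v a = n}]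
    [∀ n, Finite {b // w b = n}] :
    weightSeries R (fun x : α × β ↦ v x.1 + w x.2) = weightSeries R v * weightSeries R w := by
  ext n
  simp only [weightSeries, coeff_mul, coeff_mk]
  rw [Nat.card_congr (addWeightEquiv v w n), Nat.card_sigma]
  simp only [Nat.card_prod, Nat.cast_sum, Nat.cast_mul]
  exact sum_coe_sort (antidiagonal n)
    fun ij ↦ (Nat.card {a // v a = ij.1} : R) * (Nat.card {b // w b = ij.2} : R)

end WeightSeries

section ColoredMultiset

/-- Multisets of parts satisfying `p`, each part carrying one of the colors `0, …, k - 1`. -/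
abbrev ColoredMultiset (p : ℕ → Prop) (k : ℕ) : Type :=
  {M : Multiset (ℕ × ℕ) // ∀ x ∈ M, p x.1 ∧ x.2 < k}

/-- Multisets of parts satisfying `p`. -/
abbrev PartMultiset (p : ℕ → Prop) : Type :=
  {M : Multiset ℕ // ∀ j ∈ M, p j}

/-- The sum of the parts of a colored multiset. -/
def ColoredMultiset.size {p : ℕ → Prop} {k : ℕ} (M : ColoredMultiset p k) : ℕ :=
  (M.1.map Prod.fst).sum

/-- The sum of the parts of an uncolored multiset. -/
def PartMultiset.size {p : ℕ → Prop} (M : PartMultiset p) : ℕ :=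
  M.1.sum

variable (p : ℕ → Prop)

instance : Unique (ColoredMultiset p 0) where
  default := ⟨0, by simp⟩
  uniq M := Subtype.ext <| Multiset.eq_zero_of_forall_notMem fun x hx ↦ by simpa using M.2 x hx

/-- Splitting off the parts of the last color. -/
def splitLastColor (k : ℕ) :
    ColoredMultiset p (k + 1) ≃ ColoredMultiset p k × PartMultiset p where
  toFun M :=
    (⟨M.1.filter (·.2 < k), fun x hx ↦ by
      rw [Multiset.mem_filter] at hx
      exact ⟨(M.2 x hx.1).1, hx.2⟩⟩,
    ⟨(M.1.filter (¬ ·.2 < k)).map Prod.fst, fun j hj ↦ by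
      obtain ⟨x, hx, rfl⟩ := Multiset.mem_map.1 hj
      exact (M.2 x (Multiset.mem_of_mem_filter hx)).1⟩)
  invFun N := ⟨N.1.1 + N.2.1.map (·, k), fun x hx ↦ by
    rcases Multiset.mem_add.1 hx with hx | hx
    · exact (N.1.2 x hx).imp_right Nat.lt_succ_of_lt
    · obtain ⟨j, hj, rfl⟩ := Multiset.mem_map.1 hx
      exact ⟨N.2.2 j hj, k.lt_succ_self⟩⟩
  left_inv M := by
    have map_last : ((M.1.filter (¬ ·.2 < k)).map Prod.fst).map (·, k) =
        M.1.filter (¬ ·.2 < k) := by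
      rw [Multiset.map_map]
      refine (Multiset.map_congr rfl fun x hx ↦ ?_).trans (Multiset.map_id _)
      rw [Multiset.mem_filter] at hx
      have := (M.2 x hx.1).2
      exact Prod.ext rfl (by simp only [Function.comp_apply, id_eq]; omega)
    exact Subtype.ext (by simp only [map_last, Multiset.filter_add_not])
  right_inv N := by
    have filter_first := Multiset.filter_eq_self.2 fun x hx ↦ (N.1.2 x hx).2
    have filter_first_not : N.1.1.filter (¬ ·.2 < k) = 0 :=
      Multiset.filter_eq_nil.2 fun x hx ↦ not_not.2 (N.1.2 x hx).2
    refine Prod.ext (Subtype.ext ?_) (Subtype.ext ?_)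
    · simp [Multiset.filter_add, filter_first, Multiset.filter_map]
    · simp only [Multiset.filter_add, filter_first_not]
      simp [Multiset.filter_map]

variable {p}

theorem size_splitLastColor {k : ℕ} (M : ColoredMultiset p (k + 1)) :
    (splitLastColor p k M).1.size + (splitLastColor p k M).2.size = M.size := by
  simp only [splitLastColor, ColoredMultiset.size, PartMultiset.size, Equiv.coe_fn_mk]
  rw [← Multiset.sum_add, ← Multiset.map_add, Multiset.filter_add_not]

theorem card_coloredMultiset_size_eq (k n : ℕ) :
    Nat.card {M : ColoredMultiset p k // M.size = n} =
      Nat.card {M : Multiset (ℕ × ℕ) //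
        (∀ x ∈ M, p x.1 ∧ x.2 < k) ∧ (M.map Prod.fst).sum = n} :=
  Nat.card_congr (Equiv.subtypeSubtypeEquivSubtypeInter
    (fun M : Multiset (ℕ × ℕ) ↦ ∀ x ∈ M, p x.1 ∧ x.2 < k) fun M ↦ (M.map Prod.fst).sum = n)

/-- Multisets of nonzero parts with sum `n` are the partitions of `n` into such parts. -/
def partMultisetEquivRestricted [DecidablePred p] (hp : ¬ p 0) (n : ℕ) :
    {M : PartMultiset p // M.size = n} ≃ Nat.Partition.restricted n p where
  toFun M := ⟨⟨M.1.1, fun {j} hj ↦ Nat.pos_of_ne_zero fun h ↦ hp (h ▸ M.1.2 j hj), M.2⟩,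
    mem_filter.2 ⟨mem_univ _, M.1.2⟩⟩
  invFun q := ⟨⟨q.1.parts, (mem_filter.1 q.2).2⟩, q.1.parts_sum⟩
  left_inv _ := rfl
  right_inv _ := rfl

/-- The generating function of the partitions into parts satisfying `p`. -/
noncomputable def restrictedSeries (R : Type*) [Semiring R] (p : ℕ → Prop) [DecidablePred p] :
    R⟦X⟧ :=
  .mk fun n ↦ (#(Nat.Partition.restricted n p) : R)

theorem weightSeries_partMultiset (R : Type*) [CommSemiring R] [DecidablePred p] (hp : ¬ p 0) :
    weightSeries R (PartMultiset.size (p := p)) = restrictedSeries R p := by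
  ext n
  simp only [weightSeries, restrictedSeries, coeff_mk]
  rw [Nat.card_congr (partMultisetEquivRestricted hp n), Nat.card_eq_fintype_card,
    Fintype.card_coe]

theorem finite_partMultiset_size_eq (hp : ¬ p 0) (n : ℕ) :
    Finite {M : PartMultiset p // M.size = n} := by
  classical exact .of_equiv _ (partMultisetEquivRestricted hp n).symm

theorem finite_coloredMultiset_size_eq (hp : ¬ p 0) (k n : ℕ) :
    Finite {M : ColoredMultiset p k // M.size = n} := by
  induction k generalizing n with
  | zero => infer_instance
  | succ k ih =>
    have := finite_partMultiset_size_eq hp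
    have := finite_add_weight_eq (v := ColoredMultiset.size (p := p) (k := k))
      (w := PartMultiset.size (p := p)) n
    exact .of_equiv _ ((splitLastColor p k).subtypeEquiv (q := fun x ↦ x.1.size + x.2.size = n)
      fun M ↦ by rw [size_splitLastColor]).symm

theorem weightSeries_coloredMultiset (R : Type*) [CommSemiring R] [DecidablePred p] (hp : ¬ p 0)
    (k : ℕ) :
    weightSeries R (ColoredMultiset.size (p := p) (k := k)) = restrictedSeries R p ^ k := by
  induction k with
  | zero => rw [pow_zero, weightSeries_of_unique rfl]
  | succ k ih =>
    have := finite_coloredMultiset_size_eq hp k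
    have := finite_partMultiset_size_eq hp
    rw [weightSeries_congr (w := fun x ↦ x.1.size + x.2.size) (splitLastColor p k)
        size_splitLastColor, weightSeries_add, ih, weightSeries_partMultiset R hp, pow_succ]

end ColoredMultiset

section GeneratingFunctions

variable (R : Type*) [CommSemiring R]

theorem mk_coloredRegular (k l m : ℕ) :
    (.mk fun n ↦ (coloredRegular k l m n : R)) =
      restrictedSeries R (fun j ↦ ¬ l ∣ j ∧ ¬ m ∣ j) ^ k := by
  rw [← weightSeries_coloredMultiset R (by simp)]
  ext n
  simp only [weightSeries, coeff_mk, coloredRegular, card_coloredMultiset_size_eq, and_assoc]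

theorem mk_coloredLRegular (k l : ℕ) :
    (.mk fun n ↦ (coloredLRegular k l n : R)) = restrictedSeries R (¬ l ∣ ·) ^ k := by
  rw [← weightSeries_coloredMultiset R (by simp)]
  ext n
  simp only [weightSeries, coeff_mk, coloredLRegular, card_coloredMultiset_size_eq]

theorem mk_card_partition :
    (.mk fun n ↦ (Fintype.card n.Partition : R)) = restrictedSeries R fun _ ↦ True := by
  ext n
  simp [restrictedSeries, Nat.Partition.restricted]

end GeneratingFunctions

section Products

variable (R : Type*) [CommRing R]

section Topology

variable [TopologicalSpace R]

theorem continuous_expand {m : ℕ} (hm : m ≠ 0) : Continuous (expand m hm : R⟦X⟧ →ₐ[R] R⟦X⟧) := by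
  refine continuous_iff_continuousAt.2 fun g ↦ ?_
  rw [ContinuousAt, WithPiTopology.tendsto_iff_coeff_tendsto]
  intro d
  simp only [coeff_expand]
  split_ifs
  · exact (WithPiTopology.continuous_coeff R (d / m)).continuousAt
  · exact tendsto_const_nhds

theorem hasProd_one_sub_X_pow_mul {m : ℕ} (hm : m ≠ 0) :
    HasProd (fun i ↦ 1 - (X : R⟦X⟧) ^ (m * (i + 1))) (expand m hm (pentagonalSeries R)) := by
  convert (WithPiTopology.hasProd_one_sub_X_pow R).map (expand m hm) (continuous_expand R hm)
    using 1
  ext1 i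
  simp [pow_mul]

theorem hasProd_one_sub_X_pow_of_dvd {m : ℕ} (hm : m ≠ 0) :
    HasProd (fun i ↦ if m ∣ i + 1 then 1 - (X : R⟦X⟧) ^ (i + 1) else 1)
      (expand m hm (pentagonalSeries R)) := by
  have pos (i : ℕ) : 0 < m * (i + 1) := by positivity
  have pred_succ (i : ℕ) : m * (i + 1) - 1 + 1 = m * (i + 1) := Nat.sub_add_cancel (pos i)
  have injective : Function.Injective fun i ↦ m * (i + 1) - 1 := fun i j h ↦ by
    have := Nat.eq_of_mul_eq_mul_left (Nat.pos_of_ne_zero hm) (Nat.pred_inj (pos i) (pos j) h)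
    omega
  rw [← injective.hasProd_iff]
  · simpa [Function.comp_def, pred_succ] using hasProd_one_sub_X_pow_mul R hm
  · refine fun i hi ↦ if_neg fun ⟨c, hc⟩ ↦ hi ?_
    obtain ⟨j, rfl⟩ : ∃ j, c = j + 1 := Nat.exists_eq_succ_of_ne_zero (by rintro rfl; simp at hc)
    exact ⟨j, by simp only [← hc, Nat.add_sub_cancel]⟩

variable [IsTopologicalRing R] [T2Space R]

theorem hasProd_restrictedSeries_mul_pentagonalSeries (p : ℕ → Prop) [DecidablePred p] :
    HasProd (fun i ↦ if p (i + 1) then 1 else 1 - (X : R⟦X⟧) ^ (i + 1))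
      (restrictedSeries R p * pentagonalSeries R) := by
  refine ((Nat.Partition.hasProd_powerSeriesMk_card_restricted R p).mul
    (WithPiTopology.hasProd_one_sub_X_pow R)).congr_fun fun i ↦ ?_
  split_ifs
  · simp_rw [pow_mul]
    exact (WithPiTopology.tsum_pow_mul_one_sub_of_constantCoeff_eq_zero (by simp)).symm
  · rw [one_mul]

end Topology

theorem restrictedSeries_true_mul_pentagonalSeries :
    restrictedSeries R (fun _ ↦ True) * pentagonalSeries R = 1 := by
  let : TopologicalSpace R := ⊥
  have : DiscreteTopology R := ⟨rfl⟩
  refine (hasProd_restrictedSeries_mul_pentagonalSeries R _).unique ?_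
  simp [hasProd_one]

theorem pentagonalSeries_ne_zero [Nontrivial R] : pentagonalSeries R ≠ 0 :=
  right_ne_zero_of_mul_eq_one (restrictedSeries_true_mul_pentagonalSeries R)

theorem expand_pentagonalSeries_ne_zero [Nontrivial R] {m : ℕ} (hm : m ≠ 0) :
    expand m hm (pentagonalSeries R) ≠ 0 := by
  have h := congrArg (expand m hm) (restrictedSeries_true_mul_pentagonalSeries R)
  rw [map_mul, map_one] at h
  exact right_ne_zero_of_mul_eq_one h

theorem restrictedSeries_not_dvd_mul_pentagonalSeries {m : ℕ} (hm : m ≠ 0) :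
    restrictedSeries R (¬ m ∣ ·) * pentagonalSeries R = expand m hm (pentagonalSeries R) := by
  let : TopologicalSpace R := ⊥
  have : DiscreteTopology R := ⟨rfl⟩
  refine (hasProd_restrictedSeries_mul_pentagonalSeries R _).unique ?_
  simpa only [ite_not] using hasProd_one_sub_X_pow_of_dvd R hm

theorem restrictedSeries_not_dvd_and_not_dvd_mul {l m : ℕ} (hl : l ≠ 0) (hm : m ≠ 0) :
    restrictedSeries R (fun j ↦ ¬ l ∣ j ∧ ¬ m ∣ j) * pentagonalSeries R *
        expand (l.lcm m) (Nat.lcm_ne_zero hl hm) (pentagonalSeries R) =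
      expand l hl (pentagonalSeries R) * expand m hm (pentagonalSeries R) := by
  let : TopologicalSpace R := ⊥
  have : DiscreteTopology R := ⟨rfl⟩
  refine ((hasProd_restrictedSeries_mul_pentagonalSeries R _).mul
    (hasProd_one_sub_X_pow_of_dvd R (Nat.lcm_ne_zero hl hm))).unique ?_
  convert (hasProd_one_sub_X_pow_of_dvd R hl).mul (hasProd_one_sub_X_pow_of_dvd R hm) using 1
  ext1 i
  by_cases h : l ∣ i + 1 <;> by_cases h' : m ∣ i + 1 <;> simp [h, h', Nat.lcm_dvd_iff]

end Products

section Triangular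

/-- The triangular number `0 + 1 + ⋯ + k`. -/
def triangular (k : ℕ) : ℕ := k * (k + 1) / 2

theorem two_mul_triangular (k : ℕ) : 2 * triangular k = k * (k + 1) :=
  Nat.two_mul_div_two_of_even (Nat.even_mul_succ_self k)

theorem triangular_strictMono : StrictMono triangular :=
  strictMono_nat_of_lt_succ fun k ↦ by
    have := two_mul_triangular k
    have := two_mul_triangular (k + 1)
    nlinarith

theorem triangular_three_mul (j : ℕ) : triangular (3 * j) = 3 * pentagonal (-j) := by
  have := two_mul_triangular (3 * j)
  have := two_mul_natCast_pentagonal_neg j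
  zify at *
  linarith

theorem triangular_three_mul_add_one (j : ℕ) :
    triangular (3 * j + 1) = 3 * (3 * triangular j) + 1 := by
  have := two_mul_triangular (3 * j + 1)
  have := two_mul_triangular j
  linarith

theorem triangular_three_mul_add_two (j : ℕ) :
    triangular (3 * j + 2) = 3 * pentagonal (j + 1) := by
  have := two_mul_triangular (3 * j + 2)
  have := two_mul_natCast_pentagonal (j + 1)
  zify at *
  linarith

theorem range_triangular :
    Set.range triangular = (3 * ·) '' Set.range pentagonal ∪
      (· + 1) '' ((3 * ·) '' ((3 * ·) '' Set.range triangular)) := by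
  simp only [← Set.range_comp, Function.comp_def]
  refine Set.Subset.antisymm ?_ (Set.union_subset ?_ ?_)
  · rintro _ ⟨k, rfl⟩
    obtain ⟨j, rfl | rfl | rfl⟩ : ∃ j, k = 3 * j ∨ k = 3 * j + 1 ∨ k = 3 * j + 2 :=
      ⟨k / 3, by omega⟩
    · exact .inl ⟨-j, (triangular_three_mul j).symm⟩
    · exact .inr ⟨j, (triangular_three_mul_add_one j).symm⟩
    · exact .inl ⟨j + 1, (triangular_three_mul_add_two j).symm⟩
  · rintro _ ⟨k, rfl⟩
    rcases le_or_gt k 0 with hk | hk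
    · obtain ⟨j, rfl⟩ : ∃ j : ℕ, k = -j := ⟨k.natAbs, by omega⟩
      exact ⟨3 * j, triangular_three_mul j⟩
    · obtain ⟨j, rfl⟩ : ∃ j : ℕ, k = j + 1 := ⟨(k - 1).toNat, by omega⟩
      exact ⟨3 * j + 2, triangular_three_mul_add_two j⟩
  · rintro _ ⟨j, rfl⟩
    exact ⟨3 * j + 1, triangular_three_mul_add_one j⟩

end Triangular

section IndicatorSeries

section Semiring

variable (R : Type*) [Semiring R]

/-- The power series `∑ n ∈ S, X ^ n`. -/
noncomputable def indicatorSeries (S : Set ℕ) : R⟦X⟧ := .mk (S.indicator 1)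

theorem hasSum_indicatorSeries_range [TopologicalSpace R] {a : ℕ → ℕ} (ha : a.Injective) :
    HasSum (fun k ↦ (X : R⟦X⟧) ^ a k) (indicatorSeries R (Set.range a)) := by
  have h := (indicatorSeries R (Set.range a)).hasSum_of_monomials_self
  rw [← ha.hasSum_iff fun n hn ↦ by simp [indicatorSeries, hn]] at h
  simpa [Function.comp_def, indicatorSeries, ← X_pow_eq] using h

theorem indicatorSeries_union {S T : Set ℕ} (h : Disjoint S T) :
    indicatorSeries R (S ∪ T) = indicatorSeries R S + indicatorSeries R T := by
  ext n
  simp [indicatorSeries, Set.indicator_union_of_disjoint h]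

theorem X_mul_indicatorSeries (S : Set ℕ) :
    X * indicatorSeries R S = indicatorSeries R ((· + 1) '' S) := by
  classical
  ext n
  cases n <;> simp [indicatorSeries, Set.indicator_apply, coeff_succ_X_mul]

end Semiring

section CommRing

variable (R : Type*) [CommRing R]

theorem expand_indicatorSeries {m : ℕ} (hm : m ≠ 0) (S : Set ℕ) :
    expand m hm (indicatorSeries R S) = indicatorSeries R ((m * ·) '' S) := by
  classical
  ext n
  rw [coeff_expand]
  split_ifs with h
  · obtain ⟨c, rfl⟩ := h
    simp [indicatorSeries, Set.indicator_apply, hm]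
  · have : n ∉ (m * ·) '' S := fun ⟨c, _, hc⟩ ↦ h ⟨c, hc.symm⟩
    simp [indicatorSeries, this]

theorem indicatorSeries_triangular_dissection :
    indicatorSeries R (Set.range triangular) =
      expand 3 three_ne_zero (indicatorSeries R (Set.range pentagonal)) +
        X * expand 3 three_ne_zero
          (expand 3 three_ne_zero (indicatorSeries R (Set.range triangular))) := by
  have disjoint : Disjoint ((3 * ·) '' Set.range pentagonal)
      ((· + 1) '' ((3 * ·) '' ((3 * ·) '' Set.range triangular))) := by
    rw [Set.disjoint_left]
    rintro _ ⟨m, -, rfl⟩ ⟨_, ⟨t, -, rfl⟩, h⟩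
    dsimp only at h
    omega
  simp only [expand_indicatorSeries, X_mul_indicatorSeries, ← indicatorSeries_union R disjoint,
    ← range_triangular]

theorem pentagonalSeries_eq_indicatorSeries [CharP R 2] :
    pentagonalSeries R = indicatorSeries R (Set.range pentagonal) := by
  ext n
  by_cases hn : n ∈ Set.range pentagonal
  · obtain ⟨k, rfl⟩ := hn
    rw [coeff_pentagonalSeries_pentagonal]
    rcases k.even_or_odd with hk | hk <;>
      simp [indicatorSeries, Int.negOnePow_even, Int.negOnePow_odd, hk, CharTwo.neg_eq]
  · simp [indicatorSeries, hn, coeff_pentagonalSeries_eq_zero]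

end CommRing

end IndicatorSeries

section Gauss

variable {R : Type*} [CommRing R] (x : R)

/-- The product `(1 - x) (1 - x ^ 3) ⋯ (1 - x ^ (2 * N - 1))`. -/
def oddProd (N : ℕ) : R := ∏ j ∈ range N, (1 - x ^ (2 * j + 1))

/-- The product `(1 - x ^ (2 * s + 2)) (1 - x ^ (2 * s + 4)) ⋯ (1 - x ^ (2 * N))`. -/
def evenProd (s N : ℕ) : R := ∏ j ∈ Ico s N, (1 - x ^ (2 * j + 2))

theorem oddProd_succ (N : ℕ) : oddProd x (N + 1) = oddProd x N * (1 - x ^ (2 * N + 1)) :=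
  prod_range_succ _ _

theorem evenProd_succ_right {s N : ℕ} (h : s ≤ N) :
    evenProd x s (N + 1) = evenProd x s N * (1 - x ^ (2 * N + 2)) :=
  prod_Ico_succ_top h _

theorem evenProd_eq_mul_evenProd_succ_left {s N : ℕ} (h : s < N) :
    evenProd x s N = (1 - x ^ (2 * s + 2)) * evenProd x (s + 1) N :=
  prod_eq_prod_Ico_succ_bot h _

theorem oddProd_mul_evenProd (N : ℕ) :
    oddProd x N * evenProd x 0 N = ∏ j ∈ range (2 * N), (1 - x ^ (j + 1)) := by
  induction N with
  | zero => simp [oddProd, evenProd]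
  | succ N ih =>
    rw [mul_add_one, prod_range_succ, prod_range_succ, ← ih, oddProd_succ,
      evenProd_succ_right x N.zero_le]
    ring

theorem sum_shanks_telescope {N m : ℕ} (hm : m ≤ N) :
    ∑ s ∈ range (m + 1), (evenProd x s (N + 1) * oddProd x s * x ^ (s * (2 * N + 3))
      - (1 - x ^ (2 * N + 1)) * (evenProd x s N * oddProd x s * x ^ (s * (2 * N + 1)))) =
      evenProd x m N * oddProd x (m + 1) * x ^ ((m + 1) * (2 * N + 1)) := by
  induction m with
  | zero =>
    rw [zero_add, sum_range_one, evenProd_succ_right x N.zero_le, oddProd_succ]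
    simp only [oddProd, range_zero, prod_empty]
    ring
  | succ m ih =>
    rw [sum_range_succ, ih (by omega), evenProd_succ_right x hm,
      evenProd_eq_mul_evenProd_succ_left x (s := m) hm, oddProd_succ x (m + 1)]
    ring

/-- Shanks's finite form of Gauss's identity. -/
theorem oddProd_mul_sum_pow_triangular (N : ℕ) :
    oddProd x N * ∑ i ∈ range (2 * N + 1), x ^ triangular i =
      ∑ s ∈ range (N + 1), evenProd x s N * oddProd x s * x ^ (s * (2 * N + 1)) := by
  induction N with
  | zero => simp [oddProd, evenProd, triangular]
  | succ N ih =>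
    have telescope := sum_shanks_telescope x N.le_refl
    rw [sum_sub_distrib, ← mul_sum, ← ih, sub_eq_iff_eq_add] at telescope
    have triangular_odd : triangular (2 * N + 1) = (N + 1) * (2 * N + 1) := by
      linarith [two_mul_triangular (2 * N + 1)]
    have triangular_even : triangular (2 * N + 2) = (N + 1) * (2 * N + 3) := by
      linarith [two_mul_triangular (2 * N + 2)]
    rw [sum_range_succ _ (N + 1), mul_add_one 2 N, telescope, sum_range_succ _ (2 * N + 2),
      sum_range_succ _ (2 * N + 1), triangular_odd, triangular_even, oddProd_succ]
    simp only [evenProd, Ico_self, prod_empty]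
    ring

theorem pow_dvd_oddProd_mul_sum_sub_evenProd (N : ℕ) :
    x ^ (2 * N + 1) ∣
      oddProd x N * ∑ i ∈ range (2 * N + 1), x ^ triangular i - evenProd x 0 N := by
  rw [oddProd_mul_sum_pow_triangular, sum_range_succ']
  simp only [oddProd, range_zero, prod_empty, zero_mul, pow_zero, mul_one, add_sub_cancel_right]
  exact dvd_sum fun s _ ↦ Dvd.dvd.mul_left (pow_dvd_pow x (Nat.le_mul_of_pos_left _ s.succ_pos)) _

open Filter Topology in
/-- **Gauss's identity** for the generating function of the triangular numbers. -/
theorem indicatorSeries_triangular_mul_pentagonalSeries (R : Type*) [CommRing R] :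
    indicatorSeries R (Set.range triangular) * pentagonalSeries R =
      expand 2 two_ne_zero (pentagonalSeries R) ^ 2 := by
  let : TopologicalSpace R := ⊥
  have : DiscreteTopology R := ⟨rfl⟩
  have := WithPiTopology.instIsTopologicalRing R
  have := WithPiTopology.instT2Space R
  have tendsto_sum : Tendsto (fun N ↦ ∑ i ∈ range (2 * N + 1), (X : R⟦X⟧) ^ triangular i) atTop
      (𝓝 (indicatorSeries R (Set.range triangular))) :=
    (hasSum_indicatorSeries_range R triangular_strictMono.injective).tendsto_sum_nat.comp
      (tendsto_atTop_mono (fun N ↦ show N ≤ _ by omega) tendsto_id)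
  have tendsto_prod : Tendsto (fun N ↦ ∏ j ∈ range (2 * N), (1 - (X : R⟦X⟧) ^ (j + 1))) atTop
      (𝓝 (pentagonalSeries R)) :=
    (WithPiTopology.hasProd_one_sub_X_pow R).tendsto_prod_nat.comp
      (tendsto_atTop_mono (fun N ↦ show N ≤ _ by omega) tendsto_id)
  have tendsto_even : Tendsto (evenProd (X : R⟦X⟧) 0) atTop
      (𝓝 (expand 2 two_ne_zero (pentagonalSeries R))) := by
    refine (hasProd_one_sub_X_pow_mul R two_ne_zero).tendsto_prod_nat.congr fun N ↦ ?_
    simp only [evenProd, Nat.Ico_zero_eq_range, mul_add_one]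
  have tendsto_error : Tendsto (fun N ↦ oddProd (X : R⟦X⟧) N *
      ∑ i ∈ range (2 * N + 1), X ^ triangular i - evenProd X 0 N) atTop (𝓝 0) := by
    refine (WithPiTopology.tendsto_iff_coeff_tendsto ..).2 fun d ↦
      tendsto_atTop_of_eventually_const (i₀ := d) fun N hN ↦ ?_
    rw [map_zero]
    exact X_pow_dvd_iff.1 (pow_dvd_oddProd_mul_sum_sub_evenProd X N) d (by omega)
  have tendsto_mul_even := (tendsto_error.add tendsto_even).mul tendsto_even
  rw [zero_add, ← sq] at tendsto_mul_even
  refine tendsto_nhds_unique (tendsto_sum.mul tendsto_prod) (tendsto_mul_even.congr fun N ↦ ?_)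
  rw [← oddProd_mul_evenProd, sub_add_cancel]
  ring

end Gauss

section ModTwo

theorem expand_eq_pow_of_zmod (p : ℕ) [Fact p.Prime] (g : (ZMod p)⟦X⟧) :
    expand p (NeZero.ne p) g = g ^ p := by
  have h := MvPowerSeries.map_frobenius_expand (σ := Unit) p (NeZero.ne p) (f := g)
  rw [ZMod.frobenius_zmod, MvPowerSeries.map_id] at h
  exact h

local notation "φ" => pentagonalSeries (ZMod 2)

theorem pentagonalSeries_pow_three :
    φ ^ 3 = indicatorSeries (ZMod 2) (Set.range triangular) := by
  refine mul_right_cancel₀ (pentagonalSeries_ne_zero _) ?_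
  rw [indicatorSeries_triangular_mul_pentagonalSeries, expand_eq_pow_of_zmod 2]
  ring

theorem pentagonalSeries_pow_three_dissection :
    φ ^ 3 = expand 3 three_ne_zero φ +
      X * expand 3 three_ne_zero (expand 3 three_ne_zero φ) ^ 3 := by
  have h := indicatorSeries_triangular_dissection (ZMod 2)
  rwa [← pentagonalSeries_pow_three, ← pentagonalSeries_eq_indicatorSeries, map_pow, map_pow] at h

theorem restrictedSeries_three_four_mul_pow_three :
    restrictedSeries (ZMod 2) (fun j ↦ ¬ 3 ∣ j ∧ ¬ 4 ∣ j) * expand 3 three_ne_zero φ ^ 3 =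
      φ ^ 3 := by
  have expand_four (g : (ZMod 2)⟦X⟧) : expand 4 four_ne_zero g = g ^ 4 := by
    have h := expand_mul 2 two_ne_zero 2 two_ne_zero g
    rwa [expand_eq_pow_of_zmod 2, expand_eq_pow_of_zmod 2, ← pow_mul] at h
  have expand_twelve : expand (Nat.lcm 3 4) (by norm_num) φ = expand 3 three_ne_zero φ ^ 4 := by
    rw [← map_pow, ← expand_four]
    exact expand_mul 3 three_ne_zero 4 four_ne_zero φ
  have h := restrictedSeries_not_dvd_and_not_dvd_mul (ZMod 2) three_ne_zero four_ne_zero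
  rw [expand_twelve, expand_four] at h
  refine mul_right_cancel₀ (mul_ne_zero (pentagonalSeries_ne_zero _)
    (expand_pentagonalSeries_ne_zero _ three_ne_zero)) ?_
  linear_combination h

theorem restrictedSeries_three_four :
    restrictedSeries (ZMod 2) (fun j ↦ ¬ 3 ∣ j ∧ ¬ 4 ∣ j) =
      expand 3 three_ne_zero (restrictedSeries (ZMod 2) fun _ ↦ True) ^ 2 +
        X * expand 3 three_ne_zero (restrictedSeries (ZMod 2) (¬ 3 ∣ ·)) ^ 3 := by
  have h_all := congrArg (expand 3 three_ne_zero)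
    (restrictedSeries_true_mul_pentagonalSeries (ZMod 2))
  have h_three := congrArg (expand 3 three_ne_zero)
    (restrictedSeries_not_dvd_mul_pentagonalSeries (ZMod 2) three_ne_zero)
  rw [map_mul, map_one] at h_all
  rw [map_mul] at h_three
  refine mul_right_cancel₀
    (pow_ne_zero 3 (expand_pentagonalSeries_ne_zero (ZMod 2) three_ne_zero)) ?_
  rw [restrictedSeries_three_four_mul_pow_three, pentagonalSeries_pow_three_dissection, ← h_three]
  linear_combination (-expand 3 three_ne_zero φ *
    (expand 3 three_ne_zero (restrictedSeries (ZMod 2) fun _ ↦ True) *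
      expand 3 three_ne_zero φ + 1)) * h_all

theorem mk_coloredRegular_two_three_four :
    (.mk fun n ↦ (coloredRegular 2 3 4 n : ZMod 2)) =
      expand 12 (by norm_num) (.mk fun n ↦ (Fintype.card n.Partition : ZMod 2)) +
        X ^ 2 * expand 6 (by norm_num) (.mk fun n ↦ (coloredLRegular 3 3 n : ZMod 2)) := by
  rw [mk_coloredRegular, mk_coloredLRegular, mk_card_partition, restrictedSeries_three_four,
    ← expand_eq_pow_of_zmod 2, ← expand_eq_pow_of_zmod 2, map_add, map_mul, expand_X, ← map_pow,
    ← expand_mul, ← expand_mul, ← expand_mul]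

end ModTwo

theorem stmt_4 (n : ℕ) :
    coloredRegular 2 3 4 (6 * n + 4) ≡ 0 [MOD 2] ∧
    coloredRegular 2 3 4 (6 * n + 2) ≡ coloredLRegular 3 3 n [MOD 2] ∧
    coloredRegular 2 3 4 (12 * n + 6) ≡ 0 [MOD 2] ∧
    coloredRegular 2 3 4 (12 * n) ≡ Fintype.card (Nat.Partition n) [MOD 2] := by
  have coeff_eq (m : ℕ) := congrArg (coeff m) mk_coloredRegular_two_three_four
  simp only [map_add, coeff_X_pow_mul', coeff_expand, coeff_mk] at coeff_eq
  simp only [← ZMod.natCast_eq_natCast_iff, coeff_eq, Nat.cast_zero]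
  refine ⟨?_, ?_, ?_, ?_⟩
  · rw [if_neg (by omega), if_pos (by omega), if_neg (by omega), add_zero]
  · rw [if_neg (by omega), if_pos (by omega), if_pos (by omega), zero_add,
      show (6 * n + 2 - 2) / 6 = n by omega]
  · rw [if_neg (by omega), if_pos (by omega), if_neg (by omega), add_zero]
  · rw [if_pos (by omega), ite_eq_right_iff.2 fun _ ↦ if_neg (by omega), add_zero,
      show 12 * n / 12 = n by omega]
end

section
/- For every nonnegative integer n, b^2_{3,8}(2n+1) ≡ 2·b_{2,3}(n) (mod 3). -/
/-!
Write `f_d = ∏_{i ≥ 1} (1 - q^{d i})`. The generating functions `F = ∑ b²_{3,8}(n) qⁿ` and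
`G = ∑ b_{2,3}(n) qⁿ` equal `(f₃ f₈ / (f₁ f₂₄))²` and `f₂ f₃ / (f₁ f₆)`. Modulo `3` cubing is the
Frobenius, so `f_{3d} = f_d³` and these become `F f₈⁴ = f₁⁴` and `G f₂² = f₁²`. By Gauss's product
`f₁² = f₂ φ(-q)`, the `2`-dissection of `f₁⁴` is that of `φ(-q)²`, and splitting the pairs `(a, b)`
in `φ(-q)² = ∑ (-1)^{a+b} q^{a²+b²}` by the parity of `a + b` gives
`φ(-q)² = φ(q²)² - 4 q ψ(q⁴)²`. Since `ψ(q⁴) = f₈² / f₄`, the odd part of `F` is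
`-4 q f₂² / f₄² = -4 q G(q²)`.
-/

open PowerSeries Filter Topology
open scoped PowerSeries.WithPiTopology

section Convergence

variable {ι R : Type*} [CommRing R] [TopologicalSpace R]

theorem summable_of_X_pow_dvd {f : ι → R⟦X⟧} {e : ι → ℕ} (he : Tendsto e cofinite atTop)
    (hf : ∀ i, X ^ e i ∣ f i) : Summable f := by
  refine (WithPiTopology.summable_iff_summable_coeff R).2 fun n =>
    summable_of_hasFiniteSupport ?_
  refine Set.Finite.subset (he.eventually_gt_atTop n) fun i hi => ?_
  contrapose! hi
  simpa using X_pow_dvd_iff.1 (hf i) n (by simpa using hi)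

theorem tendsto_zero_of_X_pow_dvd {f : ℕ → R⟦X⟧} (hf : ∀ n, X ^ n ∣ f n) :
    Tendsto f atTop (𝓝 0) := by
  refine (WithPiTopology.tendsto_iff_coeff_tendsto R _ _ _).2 fun k =>
    tendsto_const_nhds.congr' ?_
  filter_upwards [eventually_gt_atTop k] with n hn
  simpa using (X_pow_dvd_iff.1 (hf n) k hn).symm

theorem multipliable_one_add_of_X_pow_dvd {f : ℕ → R⟦X⟧} (hf : ∀ n, X ^ n ∣ f n) :
    Multipliable fun n => 1 + f n := by
  refine WithPiTopology.multipliable_one_add_of_tendsto_order_atTop_nhds_top R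
    (ENat.tendsto_nhds_top_iff_natCast_lt.2 fun k => ?_)
  filter_upwards [eventually_gt_atTop k] with n hn
  exact (Nat.cast_lt.2 hn).trans_le (nat_le_order _ n (X_pow_dvd_iff.1 (hf n)))

theorem multipliable_one_sub_of_X_pow_dvd {f : ℕ → R⟦X⟧} (hf : ∀ n, X ^ n ∣ f n) :
    Multipliable fun n => 1 - f n := by
  simpa only [sub_eq_add_neg] using multipliable_one_add_of_X_pow_dvd fun n => dvd_neg.2 (hf n)

theorem continuous_expand_s5 (p : ℕ) (hp : p ≠ 0) : Continuous (expand (R := R) p hp) := by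
  refine continuous_iff_continuousAt.2 fun F =>
    (WithPiTopology.tendsto_iff_coeff_tendsto R _ _ _).2 fun n => ?_
  by_cases h : p ∣ n
  · simpa only [coeff_expand, if_pos h] using
      (WithPiTopology.continuous_coeff R (n / p)).tendsto F
  · simpa only [coeff_expand, if_neg h] using tendsto_const_nhds

end Convergence

theorem coeff_eq_zero_of_expand_mul_eq_expand {R : Type*} [CommRing R] {p : ℕ} (hp : p ≠ 0)
    {u F G : R⟦X⟧} (hu : IsUnit u) (h : expand p hp u * F = expand p hp G) {n : ℕ}
    (hn : ¬p ∣ n) : coeff n F = 0 := by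
  obtain ⟨v, huv⟩ := hu.exists_left_inv
  have hF : F = expand p hp (v * G) := by
    rw [map_mul, ← h, ← mul_assoc, ← map_mul, huv, map_one, one_mul]
  rw [hF, coeff_expand_of_not_dvd p hp _ hn]

section EulerFunction

/-- The Euler function `f_d = ∏_{i ≥ 1} (1 - q^{d i})`, as a formal power series in `q = X`. It
carries the junk value `∏' i, 0` at `d = 0`. -/
noncomputable def eulerFunction (R : Type*) [CommRing R] [TopologicalSpace R] (d : ℕ) : R⟦X⟧ :=
  ∏' i : ℕ, (1 - X ^ (d * (i + 1)))

variable (R : Type*) [CommRing R] [TopologicalSpace R] {d : ℕ}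

theorem hasProd_eulerFunction (hd : d ≠ 0) :
    HasProd (fun i : ℕ => 1 - X ^ (d * (i + 1))) (eulerFunction R d) :=
  (multipliable_one_sub_of_X_pow_dvd fun i => pow_dvd_pow X <|
    (Nat.le_succ i).trans (Nat.le_mul_of_pos_left _ (Nat.pos_of_ne_zero hd))).hasProd

variable [T2Space R]

theorem expand_eulerFunction (p : ℕ) (hp : p ≠ 0) (hd : d ≠ 0) :
    expand p hp (eulerFunction R d) = eulerFunction R (p * d) := by
  have h := (hasProd_eulerFunction R hd).map (expand p hp) (continuous_expand_s5 p hp)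
  refine h.unique ?_
  convert! hasProd_eulerFunction R (mul_ne_zero hp hd) using 2 with i
  simp only [Function.comp_apply, map_sub, map_one, map_pow, expand_X, ← pow_mul, mul_assoc]

theorem isUnit_eulerFunction (hd : d ≠ 0) : IsUnit (eulerFunction R d) := by
  have h := (hasProd_eulerFunction R hd).map constantCoeff
    (WithPiTopology.continuous_constantCoeff R)
  have h1 : constantCoeff (eulerFunction R d) = 1 := by
    refine h.unique ?_
    convert! hasProd_one (α := R) (β := ℕ) using 2 with i
    simp [hd]
  exact isUnit_iff_constantCoeff.2 (h1 ▸ isUnit_one)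

theorem eulerFunction_pow_char [IsTopologicalRing R] (p : ℕ) [Fact p.Prime] [CharP R p]
    (hd : d ≠ 0) : eulerFunction R d ^ p = eulerFunction R (p * d) := by
  have : CharP R⟦X⟧ p := charP_of_injective_ringHom C_injective p
  refine ((hasProd_eulerFunction R hd).pow p).unique ?_
  convert! hasProd_eulerFunction R (mul_ne_zero (Fact.out : p.Prime).ne_zero hd) using 2 with i
  rw [sub_pow_char, one_pow, ← pow_mul, mul_comm _ p, ← mul_assoc]

end EulerFunction

section QBinomial

variable {A : Type*} [CommRing A]

/-- The finite `q`-Pochhammer symbol `(Q; Q)_n`. -/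
def qPochhammer (Q : A) (n : ℕ) : A :=
  ∏ i ∈ Finset.range n, (1 - Q ^ (i + 1))

theorem qPochhammer_zero (Q : A) : qPochhammer Q 0 = 1 :=
  Finset.prod_range_zero _

theorem qPochhammer_succ (Q : A) (n : ℕ) :
    qPochhammer Q (n + 1) = qPochhammer Q n * (1 - Q ^ (n + 1)) :=
  Finset.prod_range_succ _ _

/-- The Gaussian binomial coefficient, defined by its Pascal rule because `Q` ranges over an
arbitrary commutative ring, where the quotient of `q`-Pochhammer symbols need not make sense. -/
def qBinomial (Q : A) : ℕ → ℕ → A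
  | _, 0 => 1
  | 0, _ + 1 => 0
  | n + 1, k + 1 => qBinomial Q n k + Q ^ (k + 1) * qBinomial Q n (k + 1)

theorem qBinomial_zero_right (Q : A) (n : ℕ) : qBinomial Q n 0 = 1 := by
  cases n <;> rfl

theorem qBinomial_succ_succ (Q : A) (n k : ℕ) :
    qBinomial Q (n + 1) (k + 1) = qBinomial Q n k + Q ^ (k + 1) * qBinomial Q n (k + 1) :=
  rfl

theorem qBinomial_eq_zero_of_lt (Q : A) {n k : ℕ} (h : n < k) : qBinomial Q n k = 0 := by
  induction n generalizing k with
  | zero =>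
    obtain ⟨k, rfl⟩ := Nat.exists_eq_succ_of_ne_zero h.ne'
    rfl
  | succ n ih =>
    obtain ⟨k, rfl⟩ := Nat.exists_eq_succ_of_ne_zero (Nat.ne_zero_of_lt h)
    rw [qBinomial_succ_succ, ih (by lia), ih (by lia), mul_zero, add_zero]

theorem qBinomial_self (Q : A) (n : ℕ) : qBinomial Q n n = 1 := by
  induction n with
  | zero => rfl
  | succ n ih =>
    rw [qBinomial_succ_succ, ih, qBinomial_eq_zero_of_lt Q n.lt_succ_self, mul_zero, add_zero]

theorem qBinomial_succ_succ' (Q : A) (n k : ℕ) :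
    qBinomial Q (n + 1) (k + 1) = Q ^ (n - k) * qBinomial Q n k + qBinomial Q n (k + 1) := by
  induction n generalizing k with
  | zero => cases k <;> simp [qBinomial]
  | succ n ih =>
    rcases lt_trichotomy k (n + 1) with h | rfl | h
    · obtain ⟨c, rfl⟩ := Nat.exists_eq_add_of_le (Nat.lt_succ_iff.1 h)
      cases k with
      | zero =>
        have := ih 0
        simp only [qBinomial_succ_succ, qBinomial_zero_right] at this ⊢
        simp only [Nat.sub_zero, zero_add] at this ⊢
        linear_combination Q * this
      | succ k =>
        have h1 := ih (k + 1)
        have h0 := ih k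
        rw [qBinomial_succ_succ]
        rw [show k + 1 + c - (k + 1) = c by lia] at h1
        rw [show k + 1 + c - k = c + 1 by lia] at h0
        rw [show k + 1 + c + 1 - (k + 1) = c + 1 by lia]
        have h2 := qBinomial_succ_succ Q (k + 1 + c) k
        have h3 := qBinomial_succ_succ Q (k + 1 + c) (k + 1)
        linear_combination h0 + Q ^ (k + 2) * h1 - Q ^ (c + 1) * h2 - h3
    · rw [qBinomial_succ_succ, qBinomial_self, qBinomial_eq_zero_of_lt Q (n + 1).lt_succ_self]
      simp
    · simp only [qBinomial_eq_zero_of_lt Q h, qBinomial_eq_zero_of_lt Q (h.trans k.lt_succ_self),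
        qBinomial_eq_zero_of_lt Q (Nat.succ_lt_succ h), mul_zero, add_zero]

theorem qBinomial_add_mul_qPochhammer (Q : A) (a b : ℕ) :
    qBinomial Q (a + b) a * qPochhammer Q a * qPochhammer Q b = qPochhammer Q (a + b) := by
  induction a generalizing b with
  | zero => simp [qBinomial_zero_right, qPochhammer_zero]
  | succ a iha =>
    induction b with
    | zero => simp [qBinomial_self, qPochhammer_zero]
    | succ b ihb =>
      have h := iha (b + 1)
      rw [show a + 1 + b = a + (b + 1) by lia] at ihb
      rw [show a + 1 + (b + 1) = a + (b + 1) + 1 by lia, qBinomial_succ_succ]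
      simp only [qPochhammer_succ] at h ihb ⊢
      linear_combination (1 - Q ^ (a + 1)) * h + Q ^ (a + 1) * (1 - Q ^ (b + 1)) * ihb

theorem sum_qBinomial_succ (Q : A) (N : ℕ) (t : ℕ → A) :
    ∑ k ∈ Finset.range (N + 2), qBinomial Q (N + 1) k * t k =
      ∑ k ∈ Finset.range (N + 1), qBinomial Q N k * (t (k + 1) + Q ^ k * t k) := by
  have hlast : ∑ k ∈ Finset.range (N + 1), qBinomial Q N k * (Q ^ k * t k) =
      ∑ k ∈ Finset.range (N + 2), qBinomial Q N k * (Q ^ k * t k) := by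
    rw [Finset.sum_range_succ _ (N + 1), qBinomial_eq_zero_of_lt Q N.lt_succ_self, zero_mul,
      add_zero]
  simp only [mul_add, Finset.sum_add_distrib]
  rw [hlast, Finset.sum_range_succ', Finset.sum_range_succ' _ (N + 1), ← add_assoc,
    ← Finset.sum_add_distrib]
  simp only [qBinomial_succ_succ, qBinomial_zero_right, pow_zero, one_mul]
  refine congrArg (· + t 0) (Finset.sum_congr rfl fun k _ => ?_)
  ring

theorem sum_qBinomial_succ' (Q : A) (N : ℕ) (t : ℕ → A) :
    ∑ k ∈ Finset.range (N + 2), qBinomial Q (N + 1) k * t k =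
      ∑ k ∈ Finset.range (N + 1), qBinomial Q N k * (Q ^ (N - k) * t (k + 1) + t k) := by
  have hlast : ∑ k ∈ Finset.range (N + 1), qBinomial Q N k * t k =
      ∑ k ∈ Finset.range (N + 2), qBinomial Q N k * t k := by
    rw [Finset.sum_range_succ _ (N + 1), qBinomial_eq_zero_of_lt Q N.lt_succ_self, zero_mul,
      add_zero]
  simp only [mul_add, Finset.sum_add_distrib]
  rw [hlast, Finset.sum_range_succ', Finset.sum_range_succ' _ (N + 1), ← add_assoc,
    ← Finset.sum_add_distrib]
  simp only [qBinomial_succ_succ', qBinomial_zero_right]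
  refine congrArg (· + 1 * t 0) (Finset.sum_congr rfl fun k _ => ?_)
  ring

end QBinomial

section FiniteJacobiTripleProduct

/-- The triangular number `j (j + 1) / 2` of an integer `j`, which is always nonnegative. -/
def triangle (j : ℤ) : ℕ :=
  (j * (j + 1) / 2).toNat

theorem two_mul_triangle (j : ℤ) : 2 * (triangle j : ℤ) = j * (j + 1) := by
  have hnonneg : 0 ≤ j * (j + 1) := by
    rcases lt_or_ge j 0 with h | h <;> nlinarith
  have heven : (2 : ℤ) ∣ j * (j + 1) := (Int.even_mul_succ_self j).two_dvd
  rw [triangle, Int.toNat_of_nonneg (by lia), Int.mul_ediv_cancel' heven]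

theorem triangle_add_one (j : ℤ) : (triangle (j + 1) : ℤ) = triangle j + (j + 1) := by
  linarith [two_mul_triangle j, two_mul_triangle (j + 1)]

theorem natAbs_le_triangle_add_one (j : ℤ) : j.natAbs ≤ triangle j + 1 := by
  zify
  rcases abs_cases j with ⟨h, -⟩ | ⟨h, -⟩ <;> rw [h] <;>
    nlinarith [two_mul_triangle j, sq_nonneg (2 * j - 1), sq_nonneg (2 * j + 3)]

variable {A : Type*} [CommRing A]

/-- The general term `a^{j(j+1)/2} b^{j(j-1)/2}` of Ramanujan's theta series. -/
def thetaTerm (a b : A) (j : ℤ) : A :=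
  a ^ triangle j * b ^ triangle (-j)

theorem mul_thetaTerm_eq_mul_thetaTerm_add_one (a b : A) {p q : ℕ} {j : ℤ} (h : p = q + j) :
    a * (a * b) ^ p * thetaTerm a b j = (a * b) ^ q * thetaTerm a b (j + 1) := by
  have h1 := triangle_add_one j
  have h2 := triangle_add_one (-(j + 1))
  rw [show -(j + 1) + 1 = -j by ring] at h2
  have ha : 1 + p + triangle j = q + triangle (j + 1) := by lia
  have hb : p + triangle (-j) = q + triangle (-(j + 1)) := by lia
  calc a * (a * b) ^ p * thetaTerm a b j
      = a ^ (1 + p + triangle j) * b ^ (p + triangle (-j)) := by rw [thetaTerm]; ring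
    _ = (a * b) ^ q * thetaTerm a b (j + 1) := by rw [ha, hb, thetaTerm]; ring

theorem thetaTerm_swap (a b : A) (j : ℤ) : thetaTerm b a j = thetaTerm a b (-j) := by
  rw [thetaTerm, thetaTerm, neg_neg, mul_comm]

theorem mul_thetaTerm_eq_mul_thetaTerm_sub_one (a b : A) {p q : ℕ} {j : ℤ} (h : q = p + j) :
    b * (a * b) ^ p * thetaTerm a b j = (a * b) ^ q * thetaTerm a b (j - 1) := by
  rw [thetaTerm_swap b a, thetaTerm_swap b a, mul_comm a b,
    mul_thetaTerm_eq_mul_thetaTerm_add_one b a (q := q) (by lia), neg_sub, neg_add_eq_sub]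

theorem prod_mul_prod_eq_sum_qBinomial_mul_thetaTerm (a b : A) (n m : ℕ) :
    (∏ i ∈ Finset.range n, (1 + a * (a * b) ^ i)) *
        ∏ i ∈ Finset.range m, (1 + b * (a * b) ^ i) =
      ∑ k ∈ Finset.range (n + m + 1), qBinomial (a * b) (n + m) k * thetaTerm a b (k - m) := by
  induction m with
  | zero =>
    induction n with
    | zero => simp [qBinomial_zero_right, thetaTerm, triangle]
    | succ n ih =>
      rw [Finset.prod_range_succ, mul_right_comm, ih]
      simp only [add_zero, Nat.cast_zero, sub_zero]
      rw [sum_qBinomial_succ', Finset.sum_mul]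
      refine Finset.sum_congr rfl fun k hk => ?_
      have hkn : k ≤ n := Nat.lt_succ_iff.1 (Finset.mem_range.1 hk)
      have h := mul_thetaTerm_eq_mul_thetaTerm_add_one a b (p := n) (q := n - k) (j := k) (by lia)
      push_cast
      linear_combination qBinomial (a * b) n k * h
  | succ m ih =>
    rw [Finset.prod_range_succ, ← mul_assoc, ih, ← add_assoc,
      sum_qBinomial_succ _ _ fun k : ℕ => thetaTerm a b (k - (m + 1 : ℕ)), Finset.sum_mul]
    refine Finset.sum_congr rfl fun k _ => ?_
    have h := mul_thetaTerm_eq_mul_thetaTerm_sub_one a b (p := m) (q := k) (j := k - m) (by lia)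
    rw [show ((k + 1 : ℕ) : ℤ) - (m + 1 : ℕ) = k - m by lia,
      show (k : ℤ) - (m + 1 : ℕ) = k - m - 1 by lia]
    linear_combination qBinomial (a * b) (n + m) k * h

end FiniteJacobiTripleProduct

section JacobiTripleProduct

variable {R : Type*} [CommRing R]

theorem X_pow_dvd_qPochhammer_sub {Q : R⟦X⟧} (hQ : X ∣ Q) {r n : ℕ} (h : r ≤ n) :
    X ^ (r + 1) ∣ qPochhammer Q n - qPochhammer Q r := by
  induction n, h using Nat.le_induction with
  | base => simp
  | succ n hn ih =>
    have hX : X ^ (r + 1) ∣ Q ^ (n + 1) :=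
      (pow_dvd_pow X (Nat.succ_le_succ hn)).trans (pow_dvd_pow_of_dvd hQ _)
    rw [qPochhammer_succ, mul_sub, mul_one, sub_right_comm]
    exact dvd_sub ih (hX.mul_left _)

theorem isUnit_qPochhammer {Q : R⟦X⟧} (hQ : X ∣ Q) (n : ℕ) : IsUnit (qPochhammer Q n) := by
  have h : constantCoeff (qPochhammer Q n) = 1 := by simp [qPochhammer, X_dvd_iff.1 hQ]
  exact isUnit_iff_constantCoeff.2 (h ▸ isUnit_one)

theorem X_pow_dvd_qPochhammer_mul_qBinomial_sub_one {Q : R⟦X⟧} (hQ : X ∣ Q) {r a b c : ℕ}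
    (ha : r ≤ a) (hb : r ≤ b) (hc : r ≤ c) :
    X ^ (r + 1) ∣ qPochhammer Q c * qBinomial Q (a + b) a - 1 := by
  let π := Ideal.Quotient.mk (Ideal.span {(X : R⟦X⟧) ^ (r + 1)})
  have hπ {n : ℕ} (hn : r ≤ n) : π (qPochhammer Q n) = π (qPochhammer Q r) :=
    Ideal.Quotient.eq.2 (Ideal.mem_span_singleton.2 (X_pow_dvd_qPochhammer_sub hQ hn))
  refine Ideal.mem_span_singleton.1 (Ideal.Quotient.eq.1 ?_)
  refine ((isUnit_qPochhammer hQ r).map π).mul_left_cancel ?_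
  calc π (qPochhammer Q r) * π (qPochhammer Q c * qBinomial Q (a + b) a)
      = π (qBinomial Q (a + b) a * qPochhammer Q a * qPochhammer Q b) := by
        simp only [map_mul, hπ ha, hπ hb, hπ hc]
        ring
    _ = π (qPochhammer Q r) * π 1 := by
        rw [qBinomial_add_mul_qPochhammer, hπ (ha.trans (Nat.le_add_right a b)), map_one, mul_one]

variable {a b : R⟦X⟧}

theorem X_pow_dvd_thetaTerm (hab : X ∣ a * b) (j : ℤ) : X ^ (j.natAbs - 1) ∣ thetaTerm a b j := by
  have h1 := natAbs_le_triangle_add_one j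
  have h2 := natAbs_le_triangle_add_one (-j)
  rw [Int.natAbs_neg] at h2
  calc X ^ (j.natAbs - 1) ∣ (a * b) ^ (j.natAbs - 1) := pow_dvd_pow_of_dvd hab _
    _ = a ^ (j.natAbs - 1) * b ^ (j.natAbs - 1) := mul_pow _ _ _
    _ ∣ thetaTerm a b j := mul_dvd_mul (pow_dvd_pow a (by lia)) (pow_dvd_pow b (by lia))

theorem X_pow_dvd_prod_sub_sum_thetaTerm (hab : X ∣ a * b) (n : ℕ) :
    X ^ n ∣ (∏ i ∈ Finset.range n,
        (1 + a * (a * b) ^ i) * (1 + b * (a * b) ^ i) * (1 - (a * b) ^ (i + 1))) -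
      ∑ j ∈ Finset.Icc (-n : ℤ) n, thetaTerm a b j := by
  have hsum : ∑ j ∈ Finset.Icc (-n : ℤ) n, thetaTerm a b j =
      ∑ k ∈ Finset.range (n + n + 1), thetaTerm a b (k - n) := by
    rw [Int.Icc_eq_finset_map, Finset.sum_map, show ((n : ℤ) + 1 - -n).toNat = n + n + 1 by lia]
    refine Finset.sum_congr rfl fun k _ => congrArg _ ?_
    exact neg_add_eq_sub _ _
  rw [Finset.prod_mul_distrib, Finset.prod_mul_distrib,
    prod_mul_prod_eq_sum_qBinomial_mul_thetaTerm, hsum, mul_comm, Finset.mul_sum,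
    ← Finset.sum_sub_distrib]
  refine Finset.dvd_sum fun k hk => ?_
  have hk : k ≤ n + n := Nat.lt_succ_iff.1 (Finset.mem_range.1 hk)
  obtain ⟨c, hc⟩ := Nat.exists_eq_add_of_le hk
  have hg := X_pow_dvd_qPochhammer_mul_qBinomial_sub_one hab (r := n - (k - n : ℤ).natAbs)
    (a := k) (b := c) (c := n) (by lia) (by lia) (by lia)
  have ht := X_pow_dvd_thetaTerm hab (k - n)
  rw [hc, ← qPochhammer, ← mul_assoc, ← sub_one_mul]
  exact (pow_dvd_pow X (by lia)).trans ((pow_add X _ _).dvd.trans (mul_dvd_mul hg ht))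

variable [TopologicalSpace R]

/-- Ramanujan's theta series `f(a, b) = ∑_{j ∈ ℤ} a^{j(j+1)/2} b^{j(j-1)/2}`. -/
noncomputable def ramanujanTheta (a b : R⟦X⟧) : R⟦X⟧ :=
  ∑' j : ℤ, thetaTerm a b j

theorem tendsto_natAbs_sub_one_cofinite :
    Tendsto (fun j : ℤ => j.natAbs - 1) cofinite atTop := by
  refine tendsto_atTop.2 fun n => (Set.finite_Icc (-n : ℤ) n).subset fun j hj => ?_
  have hj : ¬n ≤ j.natAbs - 1 := hj
  exact ⟨by lia, by lia⟩

theorem hasSum_ramanujanTheta (hab : X ∣ a * b) : HasSum (thetaTerm a b) (ramanujanTheta a b) :=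
  (summable_of_X_pow_dvd tendsto_natAbs_sub_one_cofinite (X_pow_dvd_thetaTerm hab)).hasSum

theorem hasProd_ramanujanTheta [IsTopologicalRing R] [T2Space R] (hab : X ∣ a * b) :
    HasProd (fun i : ℕ => (1 + a * (a * b) ^ i) * (1 + b * (a * b) ^ i) * (1 - (a * b) ^ (i + 1)))
      (ramanujanTheta a b) := by
  have hX (i : ℕ) : X ^ i ∣ (a * b) ^ i := pow_dvd_pow_of_dvd hab i
  have hmul : Multipliable fun i : ℕ =>
      (1 + a * (a * b) ^ i) * (1 + b * (a * b) ^ i) * (1 - (a * b) ^ (i + 1)) :=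
    ((multipliable_one_add_of_X_pow_dvd fun i => (hX i).mul_left a).mul
      (multipliable_one_add_of_X_pow_dvd fun i => (hX i).mul_left b)).mul
      (multipliable_one_sub_of_X_pow_dvd fun i => (hX i).trans (pow_dvd_pow _ i.le_succ))
  have hsum := (hasSum_ramanujanTheta hab).comp Finset.tendsto_Icc_neg
  have hlim := (tendsto_zero_of_X_pow_dvd (X_pow_dvd_prod_sub_sum_thetaTerm hab)).add hsum
  simp only [Function.comp_def, sub_add_cancel, zero_add] at hlim
  exact tendsto_nhds_unique hmul.hasProd.tendsto_prod_nat hlim ▸ hmul.hasProd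

end JacobiTripleProduct

section ThetaSpecializations

theorem thetaTerm_self {A : Type*} [CommRing A] (c : A) (j : ℤ) :
    thetaTerm c c j = c ^ (j.natAbs ^ 2) := by
  have hsq : triangle j + triangle (-j) = j.natAbs ^ 2 := by
    zify
    rw [sq_abs]
    linarith [two_mul_triangle j, two_mul_triangle (-j)]
  rw [thetaTerm, ← pow_add, hsq]

theorem thetaTerm_one_left {A : Type*} [CommRing A] (c : A) (j : ℤ) :
    thetaTerm 1 c j = c ^ triangle (-j) := by
  rw [thetaTerm, one_pow, one_mul]

variable {R : Type*} [CommRing R] [TopologicalSpace R] [T2Space R]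

theorem expand_ramanujanTheta (p : ℕ) (hp : p ≠ 0) {a b : R⟦X⟧} (hab : X ∣ a * b) :
    expand p hp (ramanujanTheta a b) = ramanujanTheta (expand p hp a) (expand p hp b) := by
  have hab' : X ∣ expand p hp a * expand p hp b := by
    rw [← map_mul, X_dvd_iff, constantCoeff_expand, X_dvd_iff.1 hab]
  refine ((hasSum_ramanujanTheta hab).map (expand p hp) (continuous_expand_s5 p hp)).unique ?_
  convert! hasSum_ramanujanTheta hab' using 1
  funext j
  simp only [Function.comp_apply, thetaTerm, map_mul, map_pow]

variable [IsTopologicalRing R] {d : ℕ}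

/-- Gauss's product `φ(-q) = f₁² / f₂` for `φ(q) = ∑ q^{j²}`. -/
theorem ramanujanTheta_neg_self_mul_eulerFunction (hd : d ≠ 0) :
    ramanujanTheta (-X ^ d) (-X ^ d) * eulerFunction R (2 * d) = eulerFunction R d ^ 2 := by
  have hodd : Multipliable fun i : ℕ => (1 - X ^ (d * (2 * i + 1)) : R⟦X⟧) :=
    multipliable_one_sub_of_X_pow_dvd fun i =>
      pow_dvd_pow X (by nlinarith [Nat.pos_of_ne_zero hd])
  obtain ⟨o, ho⟩ := hodd
  have heven := hasProd_eulerFunction R (mul_ne_zero two_ne_zero hd)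
  have hf : o * eulerFunction R (2 * d) = eulerFunction R d := by
    refine (ho.even_mul_odd (f := fun i => 1 - X ^ (d * (i + 1))) ?_).unique
      (hasProd_eulerFunction R hd)
    convert! heven using 4 with i
    ring
  have hX : X ∣ (-X ^ d * -X ^ d : R⟦X⟧) := (dvd_neg.2 (dvd_pow_self X hd)).mul_left _
  have hθ : ramanujanTheta (-X ^ d) (-X ^ d) = o * o * eulerFunction R (2 * d) := by
    refine (hasProd_ramanujanTheta hX).unique ?_
    convert! (ho.mul ho).mul heven using 2 with i
    ring
  rw [hθ, ← hf]
  ring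

/-- Gauss's product `ψ(q) = f₂² / f₁` for `2 ψ(q) = ∑ q^{j(j-1)/2}`, the sum being over `ℤ`. -/
theorem ramanujanTheta_one_mul_eulerFunction (hd : d ≠ 0) :
    ramanujanTheta 1 (X ^ d) * eulerFunction R d = 2 * eulerFunction R (2 * d) ^ 2 := by
  have hplus : Multipliable fun i : ℕ => (1 + X ^ (d * (i + 1)) : R⟦X⟧) :=
    multipliable_one_add_of_X_pow_dvd fun i =>
      pow_dvd_pow X (by nlinarith [Nat.pos_of_ne_zero hd])
  obtain ⟨P, hP⟩ := hplus
  have hminus := hasProd_eulerFunction R hd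
  have hf : P * eulerFunction R d = eulerFunction R (2 * d) := by
    refine (hP.mul hminus).unique ?_
    convert! hasProd_eulerFunction R (mul_ne_zero two_ne_zero hd) using 2 with i
    ring
  have hX : X ∣ (1 * X ^ d : R⟦X⟧) := (dvd_pow_self X hd).mul_left 1
  have hθ : ramanujanTheta 1 (X ^ d) = 2 * P * P * eulerFunction R d := by
    refine (hasProd_ramanujanTheta hX).unique ?_
    have hzero := HasProd.zero_mul (f := fun i : ℕ => (1 + X ^ (d * i) : R⟦X⟧)) hP
    convert! (hzero.mul hP).mul hminus using 2 with i
    · ring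
    · ring
  rw [hθ, ← hf]
  ring

end ThetaSpecializations

section Dissection

/-- The bijection given by `(u, v) ↦ (u + v, u - v)` on one copy of `ℤ × ℤ` and by
`(u, v) ↦ (u + v - 1, u - v)` on the other; it splits the pairs of integers by the parity of their
sum. -/
def sumParityEquiv : (ℤ × ℤ) ⊕ (ℤ × ℤ) ≃ ℤ × ℤ where
  toFun := Sum.elim (fun p => (p.1 + p.2, p.1 - p.2)) (fun p => (p.1 + p.2 - 1, p.1 - p.2))
  invFun p :=
    if Even (p.1 + p.2) then .inl ((p.1 + p.2) / 2, (p.1 - p.2) / 2)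
    else .inr ((p.1 + p.2 + 1) / 2, (p.1 + 1 - p.2) / 2)
  left_inv := by
    rintro (⟨u, v⟩ | ⟨u, v⟩)
    · have : Even (u + v + (u - v)) := ⟨u, by ring⟩
      refine (if_pos this).trans (congrArg Sum.inl (Prod.ext ?_ ?_)) <;>
        simp only [Sum.elim_inl] <;> lia
    · have : ¬Even (u + v - 1 + (u - v)) := by rw [Int.even_iff]; lia
      refine (if_neg this).trans (congrArg Sum.inr (Prod.ext ?_ ?_)) <;>
        simp only [Sum.elim_inr] <;> lia
  right_inv := by
    rintro ⟨a, b⟩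
    by_cases h : Even (a + b)
    · have := Int.even_iff.1 h
      simp only [if_pos h, Sum.elim_inl, Prod.mk.injEq]
      lia
    · have := Int.not_even_iff.1 h
      simp only [if_neg h, Sum.elim_inr, Prod.mk.injEq]
      lia

theorem thetaTerm_neg_mul_thetaTerm_neg_add_sub {A : Type*} [CommRing A] (c : A) (u v : ℤ) :
    thetaTerm (-c) (-c) (u + v) * thetaTerm (-c) (-c) (u - v) =
      thetaTerm (c ^ 2) (c ^ 2) u * thetaTerm (c ^ 2) (c ^ 2) v := by
  have h : (u + v).natAbs ^ 2 + (u - v).natAbs ^ 2 = 2 * (u.natAbs ^ 2 + v.natAbs ^ 2) := by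
    zify
    simp only [sq_abs]
    ring
  simp only [thetaTerm_self, ← pow_add, h, ← pow_mul, pow_mul (-c) 2, neg_sq]
  simp only [mul_add]

theorem thetaTerm_neg_mul_thetaTerm_neg_add_sub_one {A : Type*} [CommRing A] (c : A) (u v : ℤ) :
    thetaTerm (-c) (-c) (u + v - 1) * thetaTerm (-c) (-c) (u - v) =
      -c * (thetaTerm 1 (c ^ 4) u * thetaTerm 1 (c ^ 4) v) := by
  have h : (u + v - 1).natAbs ^ 2 + (u - v).natAbs ^ 2 =
      4 * (triangle (-u) + triangle (-v)) + 1 := by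
    zify
    simp only [sq_abs]
    linear_combination -2 * two_mul_triangle (-u) - 2 * two_mul_triangle (-v)
  simp only [thetaTerm_self, thetaTerm_one_left, ← pow_add, h]
  rw [pow_succ, pow_mul, Even.neg_pow ⟨2, rfl⟩, mul_comm]

variable {R : Type*} [CommRing R] [TopologicalSpace R] [IsTopologicalRing R] [T2Space R]

theorem hasSum_thetaTerm_mul_thetaTerm {a b : R⟦X⟧} (hab : X ∣ a * b) :
    HasSum (fun p : ℤ × ℤ => thetaTerm a b p.1 * thetaTerm a b p.2) (ramanujanTheta a b ^ 2) := by
  have hX (p : ℤ × ℤ) : X ^ ((p.1.natAbs - 1) + (p.2.natAbs - 1)) ∣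
      thetaTerm a b p.1 * thetaTerm a b p.2 := by
    rw [pow_add]
    exact mul_dvd_mul (X_pow_dvd_thetaTerm hab p.1) (X_pow_dvd_thetaTerm hab p.2)
  have htendsto :
      Tendsto (fun p : ℤ × ℤ => (p.1.natAbs - 1) + (p.2.natAbs - 1)) cofinite atTop := by
    refine tendsto_atTop.2 fun n => ((Set.finite_Icc (-n : ℤ) n).prod
      (Set.finite_Icc (-n : ℤ) n)).subset fun p hp => ?_
    have hp : ¬n ≤ (p.1.natAbs - 1) + (p.2.natAbs - 1) := hp
    simp only [Set.mem_prod, Set.mem_Icc]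
    lia
  rw [sq]
  exact (hasSum_ramanujanTheta hab).mul (hasSum_ramanujanTheta hab)
    (summable_of_X_pow_dvd htendsto hX)

theorem ramanujanTheta_neg_self_sq {c : R⟦X⟧} (hc : X ∣ c) :
    ramanujanTheta (-c) (-c) ^ 2 =
      ramanujanTheta (c ^ 2) (c ^ 2) ^ 2 - c * ramanujanTheta 1 (c ^ 4) ^ 2 := by
  have hneg := hasSum_thetaTerm_mul_thetaTerm (R := R) (a := -c) (b := -c)
    ((dvd_neg.2 hc).mul_left _)
  have heven := hasSum_thetaTerm_mul_thetaTerm (R := R) (a := c ^ 2) (b := c ^ 2)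
    ((dvd_pow hc two_ne_zero).mul_left _)
  have hodd := (hasSum_thetaTerm_mul_thetaTerm (R := R) (a := 1) (b := c ^ 4)
    ((dvd_pow hc four_ne_zero).mul_left 1)).mul_left (-c)
  rw [sub_eq_add_neg, ← neg_mul]
  refine (sumParityEquiv.hasSum_iff.2 hneg).unique (HasSum.sum ?_ ?_)
  · convert! heven using 2 with p
    exact thetaTerm_neg_mul_thetaTerm_neg_add_sub c p.1 p.2
  · convert! hodd using 2 with p
    exact thetaTerm_neg_mul_thetaTerm_neg_add_sub_one c p.1 p.2

/-- The `2`-dissection of `f₁⁴`, multiplied by `f₄²`. -/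
theorem eulerFunction_four_sq_mul_eulerFunction_one_pow_four :
    eulerFunction R 4 ^ 2 * eulerFunction R 1 ^ 4 =
      expand 2 two_ne_zero
          (eulerFunction R 2 ^ 2 * eulerFunction R 1 ^ 2 * ramanujanTheta X X ^ 2) -
        4 * X * eulerFunction R 2 ^ 2 * eulerFunction R 8 ^ 4 := by
  have hφ := ramanujanTheta_neg_self_mul_eulerFunction (R := R) one_ne_zero
  have hψ := ramanujanTheta_one_mul_eulerFunction (R := R) four_ne_zero
  have hsq := ramanujanTheta_neg_self_sq (R := R) (dvd_refl X)
  simp only [pow_one, mul_one, Nat.reduceMul] at hφ hψ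
  simp only [map_mul, map_pow, expand_eulerFunction R 2 two_ne_zero two_ne_zero,
    expand_eulerFunction R 2 two_ne_zero one_ne_zero,
    expand_ramanujanTheta 2 two_ne_zero (dvd_mul_right (X : R⟦X⟧) X), expand_X, Nat.reduceMul]
  linear_combination
    eulerFunction R 4 ^ 2 * eulerFunction R 2 ^ 2 * hsq -
    eulerFunction R 4 ^ 2 *
      (ramanujanTheta (-X) (-X) * eulerFunction R 2 + eulerFunction R 1 ^ 2) * hφ -
    X * eulerFunction R 2 ^ 2 *
      (ramanujanTheta 1 (X ^ 4) * eulerFunction R 4 + 2 * eulerFunction R 8 ^ 2) * hψ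

end Dissection

section MultisetsOfWeight

variable {ι : Type*}

/-- The multisets of elements of `S` whose total weight, counted with multiplicity, is `n`:
the partitions of `n` when `ι` is a type of colored parts and `w` gives the size of a part. -/
def multisetsOfWeight (S : Set ι) (w : ι → ℕ) (n : ℕ) : Set (Multiset ι) :=
  {M | (∀ i ∈ M, i ∈ S) ∧ (M.map w).sum = n}

variable {S : Set ι} {w : ι → ℕ}

theorem finite_multisetsOfWeight (hS : S.Finite) (hw : ∀ i ∈ S, w i ≠ 0) (n : ℕ) :
    (multisetsOfWeight S w n).Finite := by
  classical
  refine (Set.finite_Icc 0 (n • hS.toFinset.val)).subset fun M ⟨hMS, hMn⟩ => ⟨zero_le, ?_⟩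
  refine Multiset.le_iff_count.2 fun i => ?_
  by_cases hi : i ∈ M
  · have hcard : M.card ≤ (M.map w).sum := by
      simpa using Multiset.card_nsmul_le_sum (s := M.map w) (a := 1) (by
        simpa using fun i hi => Nat.one_le_iff_ne_zero.2 (hw i (hMS i hi)))
    have hcount : Multiset.count i hS.toFinset.val = 1 :=
      Multiset.count_eq_one_of_mem hS.toFinset.nodup (hS.mem_toFinset.2 (hMS i hi))
    rw [Multiset.count_nsmul, hcount, mul_one]
    exact (Multiset.count_le_card i M).trans (hcard.trans hMn.le)
  · rw [Multiset.count_eq_zero_of_notMem hi]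
    exact zero_le

theorem multisetsOfWeight_insert_of_lt {a : ι} {n : ℕ} (hn : n < w a) :
    multisetsOfWeight (insert a S) w n = multisetsOfWeight S w n := by
  ext M
  refine ⟨fun ⟨hMS, hMn⟩ => ⟨fun i hi => (hMS i hi).resolve_left ?_, hMn⟩,
    fun ⟨hMS, hMn⟩ => ⟨fun i hi => .inr (hMS i hi), hMn⟩⟩
  rintro rfl
  exact hn.not_ge (hMn ▸ Multiset.le_sum_of_mem (Multiset.mem_map_of_mem w hi))

theorem multisetsOfWeight_insert_add (S : Set ι) (w : ι → ℕ) (a : ι) (n : ℕ) :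
    multisetsOfWeight (insert a S) w (n + w a) =
      multisetsOfWeight S w (n + w a) ∪ (a ::ₘ ·) '' multisetsOfWeight (insert a S) w n := by
  ext M
  constructor
  · rintro ⟨hMS, hMn⟩
    by_cases ha : a ∈ M
    · obtain ⟨M, rfl⟩ := Multiset.exists_cons_of_mem ha
      rw [Multiset.map_cons, Multiset.sum_cons] at hMn
      exact .inr ⟨M, ⟨fun i hi => hMS i (Multiset.mem_cons_of_mem hi), by lia⟩, rfl⟩
    · exact .inl ⟨fun i hi => (hMS i hi).resolve_left (by rintro rfl; exact ha hi), hMn⟩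
  · rintro (⟨hMS, hMn⟩ | ⟨M, ⟨hMS, hMn⟩, rfl⟩)
    · exact ⟨fun i hi => .inr (hMS i hi), hMn⟩
    · refine ⟨fun i hi => (Multiset.mem_cons.1 hi).elim .inl (hMS i), ?_⟩
      rw [Multiset.map_cons, Multiset.sum_cons, hMn, add_comm]

theorem multisetsOfWeight_inter_setOf_lt (S : Set ι) (w : ι → ℕ) {n N : ℕ} (h : n < N) :
    multisetsOfWeight (S ∩ {i | w i < N}) w n = multisetsOfWeight S w n := by
  ext M
  refine ⟨fun ⟨hMS, hMn⟩ => ⟨fun i hi => (hMS i hi).1, hMn⟩,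
    fun ⟨hMS, hMn⟩ => ⟨fun i hi => ⟨hMS i hi, lt_of_le_of_lt ?_ h⟩, hMn⟩⟩
  exact hMn ▸ Multiset.le_sum_of_mem (Multiset.mem_map_of_mem w hi)

/-- The generating function of `(multisetsOfWeight S w n).ncard`. -/
noncomputable def multisetGenFun (R : Type*) [Semiring R] (S : Set ι) (w : ι → ℕ) : R⟦X⟧ :=
  mk fun n => ((multisetsOfWeight S w n).ncard : R)

variable (R : Type*) [CommRing R]

theorem multisetGenFun_empty : multisetGenFun R ∅ w = 1 := by
  ext n
  rw [multisetGenFun, coeff_mk, coeff_one]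
  split_ifs with hn
  · have h : multisetsOfWeight ∅ w n = {0} := by
      refine Set.eq_singleton_iff_unique_mem.2 ⟨⟨by simp, by simp [hn]⟩, fun M hM => ?_⟩
      exact Multiset.eq_zero_of_forall_notMem hM.1
    rw [h, Set.ncard_singleton, Nat.cast_one]
  · have h : multisetsOfWeight ∅ w n = ∅ := by
      refine Set.eq_empty_of_forall_notMem fun M hM => hn ?_
      rw [← hM.2, Multiset.eq_zero_of_forall_notMem hM.1, Multiset.map_zero, Multiset.sum_zero]
    rw [h, Set.ncard_empty, Nat.cast_zero]

theorem multisetGenFun_insert_mul {a : ι} (hS : S.Finite) (hw : ∀ i ∈ insert a S, w i ≠ 0)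
    (ha : a ∉ S) :
    multisetGenFun R (insert a S) w * (1 - X ^ w a) = multisetGenFun R S w := by
  ext n
  rw [mul_sub, mul_one, map_sub, coeff_mul_X_pow']
  simp only [multisetGenFun, coeff_mk]
  split_ifs with h
  · obtain ⟨n, rfl⟩ := Nat.exists_eq_add_of_le' h
    have hdisj : Disjoint (multisetsOfWeight S w (n + w a))
        ((a ::ₘ ·) '' multisetsOfWeight (insert a S) w n) := by
      refine Set.disjoint_left.2 ?_
      rintro _ ⟨hMS, -⟩ ⟨M, -, rfl⟩
      exact ha (hMS a (Multiset.mem_cons_self a M))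
    rw [multisetsOfWeight_insert_add, Set.ncard_union_eq hdisj
      (finite_multisetsOfWeight hS (fun i hi => hw i (.inr hi)) _)
      ((finite_multisetsOfWeight (hS.insert a) hw n).image _),
      Set.ncard_image_of_injective _ (fun _ _ => (Multiset.cons_inj_right a).1), Nat.add_sub_cancel,
      Nat.cast_add, add_sub_cancel_right]
  · rw [multisetsOfWeight_insert_of_lt (not_le.1 h), sub_zero]

theorem multisetGenFun_mul_prod (S : Finset ι) (hw : ∀ i ∈ S, w i ≠ 0) :
    multisetGenFun R (S : Set ι) w * ∏ i ∈ S, (1 - X ^ w i) = 1 := by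
  classical
  induction S using Finset.induction_on with
  | empty => rw [Finset.prod_empty, mul_one, Finset.coe_empty, multisetGenFun_empty]
  | insert a S ha ih =>
    rw [Finset.prod_insert ha, ← mul_assoc, Finset.coe_insert, multisetGenFun_insert_mul R
      S.finite_toSet (by simpa using hw) (by simpa using ha)]
    exact ih fun i hi => hw i (Finset.mem_insert_of_mem hi)

end MultisetsOfWeight

section ColoredRegular

/-- The parts allowed in the `k`-colored partitions counted by `coloredRegular k l m`, as pairs of
a size and a color. -/
def coloredRegularParts (k l m : ℕ) : Set (ℕ × ℕ) :=
  {x | ¬l ∣ x.1 ∧ ¬m ∣ x.1 ∧ x.2 < k}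

theorem coloredRegular_eq_ncard (k l m n : ℕ) :
    coloredRegular k l m n = (multisetsOfWeight (coloredRegularParts k l m) Prod.fst n).ncard :=
  rfl

theorem coloredRegular_comm (k l m n : ℕ) : coloredRegular k l m n = coloredRegular k m l n := by
  have : coloredRegularParts k l m = coloredRegularParts k m l := Set.ext fun _ => and_left_comm
  rw [coloredRegular_eq_ncard, this, coloredRegular_eq_ncard]

/-- The product `∏ (1 - q^j)` over the `j` divisible by neither `l` nor `m`, in `q = X`; its
`-k`-th power generates `coloredRegular k l m`. -/
noncomputable def regularProduct (R : Type*) [CommRing R] [TopologicalSpace R] (l m : ℕ) : R⟦X⟧ :=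
  ∏' j : ℕ, if l ∣ j ∨ m ∣ j then 1 else 1 - X ^ j

/-- The generating function of `coloredRegular k l m`. -/
noncomputable def coloredRegularGenFun (R : Type*) [Semiring R] (k l m : ℕ) : R⟦X⟧ :=
  mk fun n => (coloredRegular k l m n : R)

variable (R : Type*) [CommRing R]

theorem X_pow_dvd_coloredRegularGenFun_mul_prod_sub_one (k l m N : ℕ) :
    X ^ N ∣ coloredRegularGenFun R k l m *
      (∏ j ∈ Finset.range N, if l ∣ j ∨ m ∣ j then 1 else 1 - X ^ j) ^ k - 1 := by
  let S := {j ∈ Finset.range N | ¬(l ∣ j ∨ m ∣ j)} ×ˢ Finset.range k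
  have hS : (S : Set (ℕ × ℕ)) = coloredRegularParts k l m ∩ {x | x.1 < N} := by
    ext x
    simp only [S, coloredRegularParts, Finset.coe_product, Set.mem_prod, Finset.mem_coe,
      Finset.mem_filter, Finset.mem_range, Set.mem_inter_iff, Set.mem_ofPred_eq]
    tauto
  have hpos : ∀ x ∈ S, x.1 ≠ 0 := by
    rintro x hx h0
    simp [S, h0] at hx
  have hprod : ∏ x ∈ S, (1 - X ^ x.1 : R⟦X⟧) =
      (∏ j ∈ Finset.range N, if l ∣ j ∨ m ∣ j then 1 else 1 - X ^ j) ^ k := by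
    simp only [S, Finset.prod_product, Finset.prod_const, Finset.card_range, Finset.prod_pow,
      Finset.prod_filter, ite_not]
  have hsub : X ^ N ∣
      coloredRegularGenFun R k l m - multisetGenFun R (S : Set (ℕ × ℕ)) Prod.fst := by
    refine X_pow_dvd_iff.2 fun n hn => ?_
    rw [coloredRegularGenFun, multisetGenFun, map_sub, coeff_mk, coeff_mk, coloredRegular_eq_ncard,
      hS, multisetsOfWeight_inter_setOf_lt _ _ hn, sub_self]
  have h := hsub.mul_right (∏ x ∈ S, (1 - X ^ x.1))
  rwa [sub_mul, multisetGenFun_mul_prod R S hpos, hprod] at h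

variable [TopologicalSpace R]

theorem hasProd_regularProduct (l m : ℕ) :
    HasProd (fun j : ℕ => if l ∣ j ∨ m ∣ j then 1 else 1 - X ^ j) (regularProduct R l m) := by
  have h : Multipliable fun j : ℕ => (1 - if l ∣ j ∨ m ∣ j then 0 else X ^ j : R⟦X⟧) :=
    multipliable_one_sub_of_X_pow_dvd fun j => by split_ifs <;> simp
  refine Multipliable.hasProd ?_
  convert! h using 2 with j
  split_ifs <;> simp

theorem hasProd_ite_dvd_eulerFunction {d : ℕ} (hd : d ≠ 0) :
    HasProd (fun j : ℕ => if d ∣ j ∧ j ≠ 0 then 1 - X ^ j else 1) (eulerFunction R d) := by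
  have hinj : Function.Injective fun i : ℕ => d * (i + 1) := fun i j h => by
    simpa [hd] using h
  refine (hinj.hasProd_iff fun j hj => if_neg ?_).1 ?_
  · rintro ⟨⟨i, rfl⟩, hi⟩
    obtain ⟨i, rfl⟩ := Nat.exists_eq_succ_of_ne_zero (right_ne_zero_of_mul hi)
    exact hj ⟨i, rfl⟩
  · convert! hasProd_eulerFunction R hd using 2 with i
    simp [hd]

variable [T2Space R]

theorem coloredRegularGenFun_mul_regularProduct_pow [IsTopologicalRing R] (k l m : ℕ) :
    coloredRegularGenFun R k l m * regularProduct R l m ^ k = 1 := by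
  have hprod := ((hasProd_regularProduct R l m).tendsto_prod_nat.pow k).const_mul
    (coloredRegularGenFun R k l m)
  have hone := (tendsto_zero_of_X_pow_dvd
    (X_pow_dvd_coloredRegularGenFun_mul_prod_sub_one R k l m)).add_const 1
  simp only [sub_add_cancel, zero_add] at hone
  exact tendsto_nhds_unique hprod hone

variable {l m : ℕ}

theorem regularProduct_mul_eulerFunction [IsTopologicalRing R] (hl : l ≠ 0) (hm : m ≠ 0)
    (hlm : l.Coprime m) :
    regularProduct R l m * (eulerFunction R l * eulerFunction R m) =
      eulerFunction R 1 * eulerFunction R (l * m) := by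
  refine ((hasProd_regularProduct R l m).mul ((hasProd_ite_dvd_eulerFunction R hl).mul
    (hasProd_ite_dvd_eulerFunction R hm))).unique ?_
  convert! (hasProd_ite_dvd_eulerFunction R one_ne_zero).mul
    (hasProd_ite_dvd_eulerFunction R (mul_ne_zero hl hm)) using 2 with j
  have hdvd : l * m ∣ j ↔ l ∣ j ∧ m ∣ j :=
    ⟨fun h => ⟨dvd_of_mul_right_dvd h, dvd_of_mul_left_dvd h⟩,
      fun h => hlm.mul_dvd_of_dvd_of_dvd h.1 h.2⟩
  rcases eq_or_ne j 0 with rfl | hj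
  · simp
  · by_cases h1 : l ∣ j <;> by_cases h2 : m ∣ j <;> simp [hdvd, h1, h2, hj]

theorem regularProduct_mul_eulerFunction_pow [IsTopologicalRing R] (p : ℕ) [Fact p.Prime]
    [CharP R p] (hm : m ≠ 0) (hpm : p.Coprime m) :
    regularProduct R p m * eulerFunction R 1 ^ (p - 1) = eulerFunction R m ^ (p - 1) := by
  have hp : p ≠ 0 := (Fact.out : p.Prime).ne_zero
  have hf₁ : eulerFunction R 1 ^ (p - 1) * eulerFunction R 1 = eulerFunction R p := by
    rw [pow_sub_one_mul hp, eulerFunction_pow_char R p one_ne_zero, mul_one]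
  have hfₘ : eulerFunction R m ^ (p - 1) * eulerFunction R m = eulerFunction R (p * m) := by
    rw [pow_sub_one_mul hp, eulerFunction_pow_char R p hm]
  refine ((isUnit_eulerFunction R one_ne_zero).mul (isUnit_eulerFunction R hm)).mul_right_cancel ?_
  linear_combination regularProduct_mul_eulerFunction R hp hm hpm +
    regularProduct R p m * eulerFunction R m * hf₁ - eulerFunction R 1 * hfₘ

theorem coloredRegularGenFun_mul_eulerFunction_pow [IsTopologicalRing R] (k p : ℕ) [Fact p.Prime]
    [CharP R p] (hm : m ≠ 0) (hpm : p.Coprime m) :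
    coloredRegularGenFun R k p m * eulerFunction R m ^ ((p - 1) * k) =
      eulerFunction R 1 ^ ((p - 1) * k) := by
  rw [pow_mul, ← regularProduct_mul_eulerFunction_pow R p hm hpm, mul_pow, ← mul_assoc,
    coloredRegularGenFun_mul_regularProduct_pow, one_mul, ← pow_mul]

theorem expand_two_mul_coloredRegularGenFun_add [IsTopologicalRing R] [CharP R 3] :
    expand 2 two_ne_zero (eulerFunction R 2 ^ 2 * eulerFunction R 4 ^ 4) *
        (coloredRegularGenFun R 2 3 8 +
          4 * X * expand 2 two_ne_zero (coloredRegularGenFun R 1 3 2)) =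
      expand 2 two_ne_zero
        (eulerFunction R 2 ^ 2 * eulerFunction R 1 ^ 2 * ramanujanTheta X X ^ 2) := by
  have : Fact (Nat.Prime 3) := ⟨Nat.prime_three⟩
  have h38 := coloredRegularGenFun_mul_eulerFunction_pow R 2 3 (m := 8) (by simp) (by norm_num)
  have h32 := congrArg (expand 2 two_ne_zero)
    (coloredRegularGenFun_mul_eulerFunction_pow R 1 3 (m := 2) (by simp) (by norm_num))
  simp only [map_mul, map_pow, expand_eulerFunction R 2 two_ne_zero one_ne_zero,
    expand_eulerFunction R 2 two_ne_zero two_ne_zero, Nat.reduceMul, Nat.reduceSub] at h38 h32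
  have hleft : expand 2 two_ne_zero (eulerFunction R 2 ^ 2 * eulerFunction R 4 ^ 4) =
      eulerFunction R 4 ^ 2 * eulerFunction R 8 ^ 4 := by
    rw [map_mul, map_pow, map_pow, expand_eulerFunction R 2 two_ne_zero two_ne_zero,
      expand_eulerFunction R 2 two_ne_zero four_ne_zero]
  rw [hleft]
  linear_combination eulerFunction_four_sq_mul_eulerFunction_one_pow_four (R := R) +
    eulerFunction R 4 ^ 2 * h38 + 4 * X * eulerFunction R 8 ^ 4 * h32

end ColoredRegular

theorem stmt_5 (n : ℕ) :
    coloredRegular 2 3 8 (2 * n + 1) ≡ 2 * coloredRegular 1 2 3 n [MOD 3] := by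
  have hunit : IsUnit (eulerFunction (ZMod 3) 2 ^ 2 * eulerFunction (ZMod 3) 4 ^ 4) :=
    ((isUnit_eulerFunction _ two_ne_zero).pow 2).mul ((isUnit_eulerFunction _ four_ne_zero).pow 4)
  have hodd := coeff_eq_zero_of_expand_mul_eq_expand two_ne_zero hunit
    (expand_two_mul_coloredRegularGenFun_add (ZMod 3)) (n := 2 * n + 1) (by lia)
  have hcoeff : coeff (2 * n + 1)
      (4 * X * expand 2 two_ne_zero (coloredRegularGenFun (ZMod 3) 1 3 2)) =
      4 * (coloredRegular 1 2 3 n : ZMod 3) := by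
    rw [← map_ofNat C 4, mul_assoc, coeff_C_mul, coeff_succ_X_mul, coeff_expand_mul,
      coloredRegularGenFun, coeff_mk, coloredRegular_comm]
  rw [map_add, hcoeff, coloredRegularGenFun, coeff_mk] at hodd
  have hthree : (3 : ZMod 3) = 0 := CharP.ofNat_eq_zero _ 3
  refine (ZMod.natCast_eq_natCast_iff _ _ 3).1 ?_
  push_cast
  linear_combination hodd - 2 * (coloredRegular 1 2 3 n : ZMod 3) * hthree
end
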